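/- arXiv:math/0403509 — 14 statements merged into one kernel-verified Lean document; each statement's English description precedes it below -/
import Mathlib

section
/- Let A be a vector space over a field k equipped with two bilinear binary operations ⊢ and ⊣ such that (A,⊢) and (A,⊣) are both associative, and for all x,y,z ∈ A: (D1) x⊢(y⊣z) = (x⊢y)⊣z, (D2) x⊣(y⊢z) = x⊣(y⊣z), (D3) (x⊣y)⊢z = (x⊢y)⊢z. Then the bracket defined by [x,y] := x⊢y − y⊣x satisfies the left Leibniz identity [x,[y,z]] = [[x,y],z] + [y,[x,z]] for all x,y,z ∈ A. -/
/-- If `(A, ⊢, ⊣)` is a dialgebra over a field `k` (two bilinear associative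
operations satisfying (D1), (D2), (D3)), then the bracket `[x,y] := x⊢y − y⊣x`
satisfies the left Leibniz identity. -/
theorem dialgebra_bracket_leibniz {k A : Type*} [Field k] [AddCommGroup A] [Module k A]
    (lhd dhv : A →ₗ[k] A →ₗ[k] A)
    (lhd_assoc : ∀ x y z : A, lhd (lhd x y) z = lhd x (lhd y z))
    (dhv_assoc : ∀ x y z : A, dhv (dhv x y) z = dhv x (dhv y z))
    (D1 : ∀ x y z : A, lhd x (dhv y z) = dhv (lhd x y) z)
    (D2 : ∀ x y z : A, dhv x (lhd y z) = dhv x (dhv y z))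
    (D3 : ∀ x y z : A, lhd (dhv x y) z = lhd (lhd x y) z) :
    ∀ x y z : A,
      (fun a b : A => lhd a b - dhv b a) x ((fun a b : A => lhd a b - dhv b a) y z)
        = (fun a b : A => lhd a b - dhv b a) ((fun a b : A => lhd a b - dhv b a) x y) z
          + (fun a b : A => lhd a b - dhv b a) y ((fun a b : A => lhd a b - dhv b a) x z) := by
  intro x y z
  simp only [map_sub, LinearMap.sub_apply, D3, D2, D1, lhd_assoc, dhv_assoc]
  abel
end

section
/- Let (G,*) be a right group. Then for all x ∈ G, x*1 = (x⁻¹)⁻¹ and ((x⁻¹)⁻¹)⁻¹ = x⁻¹. -/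
/-- In a right group, `x*1 = (x⁻¹)⁻¹` and `((x⁻¹)⁻¹)⁻¹ = x⁻¹` for all `x`. -/
theorem rightGroup_inv_inv {G : Type*} (mul : G → G → G) (one : G) (inv : G → G)
    (assoc : ∀ x y z : G, mul (mul x y) z = mul x (mul y z))
    (one_mul : ∀ x : G, mul one x = x)
    (mul_inv : ∀ x : G, mul x (inv x) = one) :
    ∀ x : G, mul x one = inv (inv x) ∧ inv (inv (inv x)) = inv x := by
  have h1 : ∀ x : G, mul x one = inv (inv x) := by
    intro x
    rw [← mul_inv (inv x), ← assoc, mul_inv, one_mul]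
  have h2 : ∀ a y : G, mul (inv a) (mul a y) = y := by
    intro a y
    have e : mul a y = mul (inv (inv a)) y := by
      rw [← h1, assoc, one_mul]
    rw [e, ← assoc, mul_inv, one_mul]
  intro x
  refine ⟨h1 x, ?_⟩
  rw [← h1 (inv x)]
  have e : mul x (mul (inv x) one) = mul x (inv x) := by
    rw [← assoc, mul_inv, one_mul]
  rw [← h2 x (mul (inv x) one), e, h2]
end

section
/- Let (G,*) be a right group. Then for all x,y ∈ G, (x*y)⁻¹ = y⁻¹ * x⁻¹. -/
/-- In a right group, `(x*y)⁻¹ = y⁻¹ * x⁻¹` for all `x, y`. -/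
theorem rightGroup_inv_mul {G : Type*} (mul : G → G → G) (one : G) (inv : G → G)
    (assoc : ∀ x y z : G, mul (mul x y) z = mul x (mul y z))
    (one_mul : ∀ x : G, mul one x = x)
    (mul_inv : ∀ x : G, mul x (inv x) = one) :
    ∀ x y : G, inv (mul x y) = mul (inv y) (inv x) := by
  have idem : ∀ x, mul (mul (inv x) x) (mul (inv x) x) = mul (inv x) x := by
    intro x
    rw [assoc, ← assoc x, mul_inv, one_mul]
  have left : ∀ x z, mul (mul (inv x) x) z = z := by
    intro x z
    have hi := idem x
    generalize mul (inv x) x = e at hi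
    have h1 : mul e one = one := by
      rw [← mul_inv e, ← assoc, hi]
    calc mul e z = mul e (mul one z) := by rw [one_mul]
      _ = z := by rw [← assoc, h1, one_mul]
  intro x y
  have h : mul (mul x y) (mul (inv y) (inv x)) = one := by
    rw [assoc, ← assoc y, mul_inv, one_mul, mul_inv]
  rw [← left (mul x y) (inv (mul x y)), assoc, mul_inv, ← h, ← assoc, left]
end

section
/- Let (G,*) be a right group, let J := { x⁻¹ : x ∈ G } be the set of inverses and E := { e ∈ G : e*x = x for all x ∈ G } the set of left neutral elements. Then the map J × E → G, (h,e) ↦ h*e, is a bijection, and for all h,k ∈ J and e,f ∈ E one has (h*e)*(k*f) = (h*k)*f; in particular G is isomorphic as a semigroup to the direct product of the group J and the right zero semigroup E. -/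
/-- Let `(G,*)` be a right group, `J := {x⁻¹ : x ∈ G}` the set of inverses and
`E := {e : e*x = x ∀ x}` the set of left neutral elements. Then `(h,e) ↦ h*e` is a bijection
`J × E → G`, and `(h*e)*(k*f) = (h*k)*f` for `h,k ∈ J`, `e,f ∈ E`; in particular `G` is
isomorphic as a semigroup to the direct product of the group `J` and the right zero
semigroup `E`. -/
theorem rightGroup_structure {G : Type*} (mul : G → G → G) (one : G) (inv : G → G)
    (assoc : ∀ x y z : G, mul (mul x y) z = mul x (mul y z))
    (one_mul : ∀ x : G, mul one x = x)
    (mul_inv : ∀ x : G, mul x (inv x) = one) :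
    Function.Bijective
      (fun p : {h : G // ∃ x : G, h = inv x} × {e : G // ∀ x : G, mul e x = x} =>
        mul p.1.val p.2.val) ∧
    (∀ h k e f : G, (∃ x, h = inv x) → (∃ x, k = inv x) →
      (∀ x, mul e x = x) → (∀ x, mul f x = x) →
      mul (mul h e) (mul k f) = mul (mul h k) f) ∧
    -- `J` is a group under `*`:
    (∃ x, one = inv x) ∧
    (∀ h k : G, (∃ x, h = inv x) → (∃ x, k = inv x) → ∃ x, mul h k = inv x) ∧
    (∀ h : G, (∃ x, h = inv x) → mul one h = h ∧ mul h one = h) ∧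
    (∀ h : G, (∃ x, h = inv x) → mul h (inv h) = one ∧ mul (inv h) h = one) ∧
    -- `E` is a right zero semigroup:
    (∀ e f : G, (∀ x, mul e x = x) → (∀ x, mul f x = x) → mul e f = f) := by
  have hii : ∀ x, inv (inv x) = mul x one := fun x => by
    rw [← mul_inv (inv x), ← assoc, mul_inv, one_mul]
  have hE : ∀ x y, mul (mul (inv x) x) y = y := fun x y => by
    have h1 : mul x y = mul (mul x one) y := by rw [assoc, one_mul]
    rw [assoc, h1, ← hii, ← assoc, mul_inv, one_mul]
  have cancel : ∀ x a b, mul x a = mul x b → a = b := fun x a b h => by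
    rw [← hE x a, assoc, h, ← assoc, hE]
  have hJ : ∀ h, (∃ x, h = inv x) ↔ mul h one = h := fun h => by
    constructor
    · rintro ⟨x, rfl⟩
      apply cancel x
      rw [← assoc, mul_inv, one_mul]
    · intro hh
      exact ⟨inv h, by rw [hii, hh]⟩
  refine ⟨⟨?_, ?_⟩, ?_, ?_, ?_, ?_, ?_, ?_⟩
  · rintro ⟨⟨h, hh⟩, ⟨e, he⟩⟩ ⟨⟨k, hk⟩, ⟨f, hf⟩⟩ heq
    have heq : mul h e = mul k f := heq
    have h1 : h = k := by
      have := congrArg (fun z => mul z one) heq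
      simp only [assoc, he, hf] at this
      rwa [(hJ h).1 hh, (hJ k).1 hk] at this
    subst h1
    have h2 := cancel _ _ _ heq
    subst h2
    rfl
  · intro g
    refine ⟨⟨⟨mul g one, (hJ _).2 ?_⟩, ⟨mul (inv g) g, hE g⟩⟩, ?_⟩
    · rw [assoc, one_mul]
    · change mul (mul g one) (mul (inv g) g) = g
      rw [assoc, one_mul, ← assoc, mul_inv, one_mul]
  · intro h k e f _ _ he _
    rw [assoc, he, assoc]
  · exact (hJ one).2 (one_mul one)
  · intro h k _ hk
    exact (hJ _).2 (by rw [assoc, (hJ k).1 hk])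
  · exact fun h hh => ⟨one_mul h, (hJ h).1 hh⟩
  · intro h hh
    refine ⟨mul_inv h, ?_⟩
    have h1 := hE h one
    rwa [assoc, (hJ h).1 hh] at h1
  · exact fun e f he _ => he f
end

section
/- Let (G,⊢,⊣,1,⁻¹) be a digroup. Then an element e ∈ G satisfies e⊢x = x for all x ∈ G if and only if it satisfies x⊣e = x for all x ∈ G. -/
/-- A digroup: a set `G` with two associative operations `⊢` (`lhd`) and `⊣` (`dhv`),
a distinguished bar-unit `one`, and an inversion `inv`, satisfying the digroup
axioms (G1)–(G6). -/
class Digroup (G : Type*) where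
  lhd : G → G → G           -- `x ⊢ y`
  dhv : G → G → G           -- `x ⊣ y`
  one : G
  inv : G → G
  lhd_assoc : ∀ x y z : G, lhd (lhd x y) z = lhd x (lhd y z)
  dhv_assoc : ∀ x y z : G, dhv (dhv x y) z = dhv x (dhv y z)
  G2 : ∀ x y z : G, lhd x (dhv y z) = dhv (lhd x y) z
  G3 : ∀ x y z : G, dhv x (lhd y z) = dhv x (dhv y z)
  G4 : ∀ x y z : G, lhd (dhv x y) z = lhd (lhd x y) z
  one_lhd : ∀ x : G, lhd one x = x
  dhv_one : ∀ x : G, dhv x one = x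
  lhd_inv : ∀ x : G, lhd x (inv x) = one
  inv_dhv : ∀ x : G, dhv (inv x) x = one

open Digroup

/-- Conjugation in a digroup: `x ∘ y := x ⊢ (y ⊣ x⁻¹)`. -/
def Digroup.conj {G : Type*} [Digroup G] (x y : G) : G := lhd x (dhv y (inv x))

/-- In a digroup, `e` is a left neutral element for `⊢` iff it is a right
neutral element for `⊣`. -/
theorem digroup_bar_unit_iff {G : Type*} [Digroup G] (e : G) :
    (∀ x : G, lhd e x = x) ↔ (∀ x : G, dhv x e = x) := by
  constructor
  · intro h x
    have h1 : inv e = one := by rw [← lhd_inv e, h]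
    have h2 : dhv one e = one := by
      have := inv_dhv e
      rwa [h1] at this
    calc dhv x e = dhv (dhv x one) e := by rw [dhv_one]
      _ = x := by rw [dhv_assoc, h2, dhv_one]
  · intro h x
    have h1 : inv e = one := by rw [← inv_dhv e, h]
    have h2 : lhd e one = one := by
      have := lhd_inv e
      rwa [h1] at this
    calc lhd e x = lhd e (lhd one x) := by rw [one_lhd]
      _ = x := by rw [← lhd_assoc, h2, one_lhd]
end

section
/- Let (G,⊢,⊣,1,⁻¹) be a digroup. Then x⊢1 = 1⊣x for all x ∈ G. -/
open Digroup

/-- In a digroup, `x ⊢ 1 = 1 ⊣ x` for all `x`. -/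
theorem digroup_lhd_one_eq_one_dhv {G : Type*} [Digroup G] (x : G) :
    lhd x one = dhv one x := by
  rw [← inv_dhv x, G2, lhd_inv, inv_dhv]
end

section
/- Let (G,⊢,⊣,1,⁻¹) be a digroup. Then for all x,y ∈ G, (x⊢y)⁻¹ = y⁻¹⊢x⁻¹ = y⁻¹⊣x⁻¹ = (x⊣y)⁻¹. -/
open Digroup

/-- In a digroup, `(x⊢y)⁻¹ = y⁻¹⊢x⁻¹ = y⁻¹⊣x⁻¹ = (x⊣y)⁻¹` for all `x, y`. -/
theorem digroup_inv_of_products {G : Type*} [Digroup G] (x y : G) :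
    inv (lhd x y) = lhd (inv y) (inv x) ∧
    lhd (inv y) (inv x) = dhv (inv y) (inv x) ∧
    dhv (inv y) (inv x) = inv (dhv x y) := by
  have canc : ∀ a b : G, lhd (inv a) (lhd a b) = b := fun a b => by
    rw [← lhd_assoc, ← G4, inv_dhv, one_lhd]
  have uniq : ∀ a z : G, lhd a z = one → z = inv a := fun a z h => by
    rw [← canc a z, h, ← lhd_inv a, canc]
  have h1 : dhv one (inv x) = inv x := by
    rw [← inv_dhv x, dhv_assoc, ← G3, lhd_inv, dhv_one]
  have e1 : lhd (lhd x y) (lhd (inv y) (inv x)) = one := by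
    rw [lhd_assoc, ← lhd_assoc y, lhd_inv, one_lhd, lhd_inv]
  have e2 : lhd (lhd x y) (dhv (inv y) (inv x)) = one := by
    rw [lhd_assoc, G2 y, lhd_inv, h1, lhd_inv]
  refine ⟨(uniq _ _ e1).symm, (uniq _ _ e1).trans (uniq _ _ e2).symm, uniq _ _ ?_⟩
  rw [G4, e2]
end

section
/- Let (G,⊢,⊣,1,⁻¹) be a digroup and define conjugation by x∘y := x⊢(y⊣x⁻¹). Then for all x,y,z ∈ G: x∘(y∘z) = (x⊢y)∘z = (x⊣y)∘z, and moreover 1∘x = x and x∘1 = 1. -/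
open Digroup

theorem Digroup.aux_r1 {G : Type*} [Digroup G] (w a : G) : dhv (dhv w a) (inv a) = w := by
  rw [dhv_assoc, ← G3, lhd_inv, dhv_one]

theorem Digroup.aux_r2 {G : Type*} [Digroup G] (w a : G) : dhv (dhv w (inv a)) a = w := by
  rw [dhv_assoc, inv_dhv, dhv_one]

theorem Digroup.aux_inv {G : Type*} [Digroup G] (z a x y : G)
    (h : ∀ w : G, dhv w a = dhv (dhv w x) y) :
    dhv z (inv a) = dhv (dhv z (inv y)) (inv x) := by
  have h1 := h (dhv (dhv z (inv y)) (inv x))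
  rw [aux_r2, aux_r2] at h1
  rw [← aux_r1 (dhv (dhv z (inv y)) (inv x)) a, h1]

/-- In a digroup with conjugation `x∘y := x⊢(y⊣x⁻¹)`, one has
`x∘(y∘z) = (x⊢y)∘z = (x⊣y)∘z`, together with `1∘x = x` and `x∘1 = 1`. -/
theorem digroup_conj_props {G : Type*} [Digroup G] :
    (∀ x y z : G, conj x (conj y z) = conj (lhd x y) z) ∧
    (∀ x y z : G, conj (lhd x y) z = conj (dhv x y) z) ∧
    (∀ x : G, conj one x = x) ∧
    (∀ x : G, conj x one = one) := by
  have key1 : ∀ x y z : G, dhv z (inv (lhd x y)) = dhv (dhv z (inv y)) (inv x) :=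
    fun x y z => aux_inv z _ x y (fun w => by rw [G3, dhv_assoc])
  have key2 : ∀ x y z : G, dhv z (inv (dhv x y)) = dhv (dhv z (inv y)) (inv x) :=
    fun x y z => aux_inv z _ x y (fun w => by rw [dhv_assoc])
  refine ⟨fun x y z => ?_, fun x y z => ?_, fun x => ?_, fun x => ?_⟩
  · unfold conj
    rw [key1, lhd_assoc, ← G2 y]
  · unfold conj
    rw [key1, key2, G4]
  · unfold conj
    rw [one_lhd]
    have := aux_r1 x one
    rwa [dhv_one] at this
  · unfold conj
    have h : lhd x one = dhv one x := by
      rw [← inv_dhv x, G2, lhd_inv, inv_dhv]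
    rw [G2, h, aux_r1]
end

section
/- Let (G,⊢,⊣,1,⁻¹) be a digroup with conjugation x∘y := x⊢(y⊣x⁻¹). If e ∈ G is a bar-unit (i.e., e⊢y = y and y⊣e = y for all y ∈ G), then for every x ∈ G the element x∘e is again a bar-unit. -/
open Digroup

/-- In a digroup, if `e` is a bar-unit then so is `x ∘ e` for every `x`. -/
theorem digroup_conj_bar_unit {G : Type*} [Digroup G] (e : G)
    (he : ∀ y : G, lhd e y = y ∧ dhv y e = y) (x : G) :
    ∀ y : G, lhd (conj x e) y = y ∧ dhv y (conj x e) = y := by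
  intro y
  unfold conj
  constructor
  · rw [lhd_assoc, G4, (he (inv x)).1, ← lhd_assoc, lhd_inv, one_lhd]
  · rw [G3, ← dhv_assoc x, (he x).2, ← G3, lhd_inv, dhv_one]
end

section
/- Let (G,⊢,⊣,1,⁻¹) be a digroup with conjugation x∘y := x⊢(y⊣x⁻¹). Then for all x,y,z ∈ G: x∘(y⊢z) = (x∘y)⊢(x∘z) and x∘(y⊣z) = (x∘y)⊣(x∘z). -/
open Digroup

/-- In a digroup, conjugation distributes over both products:
`x∘(y⊢z) = (x∘y)⊢(x∘z)` and `x∘(y⊣z) = (x∘y)⊣(x∘z)`. -/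
theorem digroup_conj_distrib {G : Type*} [Digroup G] (x y z : G) :
    conj x (lhd y z) = lhd (conj x y) (conj x z) ∧
    conj x (dhv y z) = dhv (conj x y) (conj x z) := by
  have h1 : ∀ w : G, lhd (inv x) (lhd x w) = w := fun w => by
    rw [← lhd_assoc, ← G4, inv_dhv, one_lhd]
  have h2 : ∀ w : G, dhv (inv x) (dhv x w) = dhv one w := fun w => by
    rw [← dhv_assoc, inv_dhv]
  have h3 : ∀ v w : G, dhv v (dhv one w) = dhv v w := fun v w => by
    rw [← dhv_assoc, dhv_one]
  unfold conj
  constructor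
  · rw [lhd_assoc, G4, lhd_assoc y, h1, G2 y]
  · rw [G3, ← G2, dhv_assoc y (inv x), h2, h3, dhv_assoc]
end

section
/- Let (G,⊢,⊣,1,⁻¹) be a digroup with conjugation x∘y := x⊢(y⊣x⁻¹). Then (G,∘,1) is a pointed rack: for all x,y,z ∈ G, x∘(y∘z) = (x∘y)∘(x∘z); for each x ∈ G the map y ↦ x∘y is a bijection of G with inverse z ↦ x⁻¹∘z; and 1∘x = x and x∘1 = 1 for all x ∈ G. -/
open Digroup

section
variable {G : Type*} [Digroup G]

theorem dg_l1 (x y : G) : lhd (inv x) (lhd x y) = y := by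
  rw [← lhd_assoc, ← G4, inv_dhv, one_lhd]

theorem dg_l2 (x y : G) : lhd x (lhd (inv x) y) = y := by
  rw [← lhd_assoc, lhd_inv, one_lhd]

theorem dg_r1 (x y : G) : dhv (dhv y x) (inv x) = y := by
  rw [dhv_assoc, ← G3, lhd_inv, dhv_one]

theorem dg_r2 (x y : G) : dhv (dhv y (inv x)) x = y := by
  rw [dhv_assoc, inv_dhv, dhv_one]

theorem dg_lc (x y z : G) : lhd (conj x y) z = lhd x (lhd y (lhd (inv x) z)) := by
  rw [conj, lhd_assoc, G4, lhd_assoc]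

theorem dg_rc (x y z : G) : dhv z (conj x y) = dhv (dhv (dhv z x) y) (inv x) := by
  rw [conj, G3, dhv_assoc, dhv_assoc]

theorem dg_rci (x y z : G) :
    dhv z (inv (conj x y)) = dhv (dhv (dhv z x) (inv y)) (inv x) := by
  have h := dg_r1 (conj x y) (dhv (dhv (dhv z x) (inv y)) (inv x))
  rw [dg_rc, dg_r2, dg_r2, dg_r1] at h
  exact h

theorem dg_inv (x y : G) : conj (inv x) (conj x y) = y := by
  rw [conj, conj, G2, dg_l1, dg_r1]

theorem dg_inv' (x y : G) : conj x (conj (inv x) y) = y := by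
  simp only [conj, G2, dg_l2]
  rw [dg_r2]

end

/-- In a digroup, conjugation makes `(G, ∘, 1)` a pointed rack:
`∘` is left self-distributive, each left translation `y ↦ x∘y` is a bijection with
inverse `z ↦ x⁻¹∘z`, and `1∘x = x`, `x∘1 = 1`. -/
theorem digroup_conj_rack {G : Type*} [Digroup G] :
    (∀ x y z : G, conj x (conj y z) = conj (conj x y) (conj x z)) ∧
    (∀ x y : G, conj (inv x) (conj x y) = y ∧ conj x (conj (inv x) y) = y) ∧
    (∀ x : G, Function.Bijective (fun y : G => conj x y)) ∧
    (∀ x : G, conj one x = x) ∧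
    (∀ x : G, conj x one = one) := by
  refine ⟨?_, fun x y => ⟨dg_inv x y, dg_inv' x y⟩, fun x => ?_, fun x => ?_, fun x => ?_⟩
  · intro x y z
    rw [conj.eq_1 (conj x y), G2, dg_lc, dg_rci]
    simp only [conj, G2, dg_l1, dg_r2]
  · exact Function.bijective_iff_has_inverse.2
      ⟨fun y => conj (inv x) y, fun y => dg_inv x y, fun y => dg_inv' x y⟩
  · have h : inv (one : G) = one := by rw [← one_lhd (inv (one : G)), lhd_inv]
    rw [conj, one_lhd, h, dhv_one]
  · have h : lhd x one = dhv one x := by rw [← inv_dhv x, G2, lhd_inv, inv_dhv]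
    rw [conj, G2, h, dg_r1]
end

section
/- Let (G,⊢,⊣,1,⁻¹) be a digroup, let E := { e ∈ G : e⊢x = x and x⊣e = x for all x } be its set of bar-units, let J := { x⁻¹ : x ∈ G } be its set of inverses, and let ∘ denote conjugation x∘y := x⊢(y⊣x⁻¹). Then the map θ : E × J → G defined by θ(u,h) := u⊣h is a bijection, and for all u,v ∈ E, h,k ∈ J: θ(u,h)⊢θ(v,k) = θ(h∘v, h⊢k) and θ(u,h)⊣θ(v,k) = θ(u, h⊣k). -/
open Digroup

theorem dg_R1 {G : Type*} [Digroup G] (x y : G) : dhv (dhv y (inv x)) x = y := by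
  rw [dhv_assoc, inv_dhv, dhv_one]

theorem dg_R2 {G : Type*} [Digroup G] (x y : G) : dhv (dhv y x) (inv x) = y := by
  rw [dhv_assoc, ← G3, lhd_inv, dhv_one]

theorem dg_L1 {G : Type*} [Digroup G] (x y : G) : lhd x (lhd (inv x) y) = y := by
  rw [← lhd_assoc, lhd_inv, one_lhd]

theorem dg_one_dhv_inv {G : Type*} [Digroup G] (x : G) : dhv one (inv x) = inv x := by
  rw [← inv_dhv x, dg_R2]

/-- Let `G` be a digroup, `E` its set of bar-units and `J := {x⁻¹ : x ∈ G}`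
its set of inverses. Then `θ : E × J → G, θ(u,h) := u ⊣ h` is a bijection, and
`θ(u,h) ⊢ θ(v,k) = θ(h∘v, h⊢k)` and `θ(u,h) ⊣ θ(v,k) = θ(u, h⊣k)` for `u,v ∈ E`,
`h,k ∈ J`. -/
theorem digroup_product_structure {G : Type*} [Digroup G] :
    Function.Bijective
      (fun p : {e : G // ∀ x : G, lhd e x = x ∧ dhv x e = x} × {h : G // ∃ x : G, h = inv x} =>
        dhv p.1.val p.2.val) ∧
    (∀ u v h k : G,
      (∀ x, lhd u x = x ∧ dhv x u = x) → (∀ x, lhd v x = x ∧ dhv x v = x) →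
      (∃ x, h = inv x) → (∃ x, k = inv x) →
      lhd (dhv u h) (dhv v k) = dhv (conj h v) (lhd h k) ∧
      dhv (dhv u h) (dhv v k) = dhv u (dhv h k)) := by
  refine ⟨⟨?_, ?_⟩, ?_⟩
  · rintro ⟨⟨u, hu⟩, ⟨h, a, rfl⟩⟩ ⟨⟨v, hv⟩, ⟨k, b, rfl⟩⟩ he
    have he' : dhv u (inv a) = dhv v (inv b) := he
    have key : inv a = inv b := by
      have := congrArg (dhv one) he'
      rwa [← dhv_assoc, ← dhv_assoc, (hu _).2, (hv _).2, dg_one_dhv_inv, dg_one_dhv_inv] at this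
    have key2 : u = v := by
      rw [← dg_R1 a u, he', ← key, dg_R1]
    subst key2
    simp only [key]
  · intro x
    refine ⟨⟨⟨dhv x (inv x), fun y => ⟨?_, ?_⟩⟩, ⟨inv (inv x), _, rfl⟩⟩, ?_⟩
    · rw [G4, lhd_assoc, dg_L1]
    · rw [← dhv_assoc, dg_R2]
    · exact dg_R2 (inv x) x
  · intro u v h k hu hv _ _
    constructor
    · rw [G4, lhd_assoc, (hu _).1, conj, G3, ← dhv_assoc, G2, G2, dg_R1]
    · rw [dhv_assoc, ← dhv_assoc h, (hv h).2]
end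

section
/- Let H be a group acting (on the left) on a set M, and suppose e ∈ M is a fixed point of the action (h • e = e for all h ∈ H). On G := M × H define (u,h)⊢(v,k) := (h • v, h*k), (u,h)⊣(v,k) := (u, h*k), distinguished element 1 := (e,1), and (u,h)⁻¹ := (e, h⁻¹). Then (G,⊢,⊣,1,⁻¹) satisfies all the digroup axioms: ⊢ and ⊣ are associative, x⊢(y⊣z) = (x⊢y)⊣z, x⊣(y⊢z) = x⊣(y⊣z), (x⊣y)⊢z = (x⊢y)⊢z, 1⊢x = x, x⊣1 = x, x⊢x⁻¹ = 1, and x⁻¹⊣x = 1 for all x,y,z ∈ G. -/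
/-- The left product on `G := M × H`: `(u,h) ⊢ (v,k) := (h • v, h*k)`. -/
def prodLhd {H M : Type*} [Group H] [MulAction H M] (x y : M × H) : M × H :=
  (x.2 • y.1, x.2 * y.2)

/-- The right product on `G := M × H`: `(u,h) ⊣ (v,k) := (u, h*k)`. -/
def prodDhv {H M : Type*} [Group H] [MulAction H M] (x y : M × H) : M × H :=
  (x.1, x.2 * y.2)

/-- Inversion on `G := M × H` (relative to the fixed point `e`): `(u,h)⁻¹ := (e, h⁻¹)`. -/
def prodInv {H M : Type*} [Group H] [MulAction H M] (e : M) (x : M × H) : M × H :=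
  (e, x.2⁻¹)

/-- If the group `H` acts on `M` with a fixed point `e`, then
`G := M × H` with `(u,h)⊢(v,k) := (h•v, h*k)`, `(u,h)⊣(v,k) := (u, h*k)`,
`1 := (e,1)` and `(u,h)⁻¹ := (e,h⁻¹)` satisfies all the digroup axioms. -/
theorem prod_digroup {H M : Type*} [Group H] [MulAction H M]
    (e : M) (he : ∀ h : H, h • e = e) :
    (∀ x y z : M × H, prodLhd (prodLhd x y) z = prodLhd x (prodLhd y z)) ∧
    (∀ x y z : M × H, prodDhv (prodDhv x y) z = prodDhv x (prodDhv y z)) ∧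
    (∀ x y z : M × H, prodLhd x (prodDhv y z) = prodDhv (prodLhd x y) z) ∧
    (∀ x y z : M × H, prodDhv x (prodLhd y z) = prodDhv x (prodDhv y z)) ∧
    (∀ x y z : M × H, prodLhd (prodDhv x y) z = prodLhd (prodLhd x y) z) ∧
    (∀ x : M × H, prodLhd (e, (1 : H)) x = x) ∧
    (∀ x : M × H, prodDhv x (e, (1 : H)) = x) ∧
    (∀ x : M × H, prodLhd x (prodInv e x) = (e, (1 : H))) ∧
    (∀ x : M × H, prodDhv (prodInv e x) x = (e, (1 : H))) := by
  refine ⟨?_, ?_, ?_, ?_, ?_, ?_, ?_, ?_, ?_⟩ <;> intros <;>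
    simp [prodLhd, prodDhv, prodInv, mul_assoc, mul_smul, he]
end

section
/- Let g be a Lie algebra over a commutative ring R and let D : g → g be a derivation of g (i.e., R-linear with D[x,y] = [Dx,y] + [x,Dy]) satisfying D ∘ D = 0. Then the bilinear bracket defined by [x,y]_D := [Dx, y] satisfies the left Leibniz identity [x,[y,z]_D]_D = [[x,y]_D,z]_D + [y,[x,z]_D]_D for all x,y,z ∈ g. -/
/-- Let `g` be a Lie algebra over a commutative ring `R` and `D` a derivation
of `g` with `D ∘ D = 0`. Then the bracket `[x,y]_D := [Dx, y]` satisfies the left Leibniz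
identity. -/
theorem derivation_bracket_leibniz {R L : Type*} [CommRing R] [LieRing L] [LieAlgebra R L]
    (D : L →ₗ[R] L)
    (hD : ∀ x y : L, D ⁅x, y⁆ = ⁅D x, y⁆ + ⁅x, D y⁆)
    (hD2 : ∀ x : L, D (D x) = 0) :
    ∀ x y z : L,
      (fun a b : L => ⁅D a, b⁆) x ((fun a b : L => ⁅D a, b⁆) y z)
        = (fun a b : L => ⁅D a, b⁆) ((fun a b : L => ⁅D a, b⁆) x y) z
          + (fun a b : L => ⁅D a, b⁆) y ((fun a b : L => ⁅D a, b⁆) x z) := by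
  intro x y z
  change ⁅D x, ⁅D y, z⁆⁆ = ⁅D ⁅D x, y⁆, z⁆ + ⁅D y, ⁅D x, z⁆⁆
  rw [hD, hD2, zero_lie, zero_add]
  exact leibniz_lie (D x) (D y) z
end
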